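/- arXiv:1210.2615 — 2 statements merged into one kernel-verified Lean document; each statement's English description precedes it below -/
import Mathlib

section
/- For q = a·i + b·j + c·k ∈ Q and q̂ = â·î + b̂·ĵ + ĉ·k̂ ∈ Q̂, the characteristic polynomial of the skew-symmetric matrix A = q + q̂ is charpoly(A)(X) = (X² + (‖q‖ + ‖q̂‖)²)·(X² + (‖q‖ − ‖q̂‖)²), where ‖q‖ = √(a²+b²+c²) and ‖q̂‖ = √(â²+b̂²+ĉ²). In particular the complex eigenvalues ω₁, ω₂ of A satisfy −ω₁² = (‖q‖+‖q̂‖)² and −ω₂² = (‖q‖−‖q̂‖)². -/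
/-!
The left and right actions of the quaternions on `ℝ⁴` commute, so the eigenvalues of `q + q̂` are
`±‖q‖i ± ‖q̂‖i`. Concretely, expanding the determinant gives
`X⁴ + 2(‖q‖² + ‖q̂‖²)X² + (‖q‖² - ‖q̂‖²)²` (`charpoly_expanded`), and this is the product
`(X² + (‖q‖ + ‖q̂‖)²)(X² + (‖q‖ - ‖q̂‖)²)`. The complex eigenvalues of `A` are the roots of
this polynomial over `ℂ`.
-/

open Matrix

noncomputable section

/-- The pure quaternion `i` as a real skew-symmetric 4×4 matrix. -/
def qi : Matrix (Fin 4) (Fin 4) ℝ := !![0,-1,0,0; 1,0,0,0; 0,0,0,-1; 0,0,1,0]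
/-- The pure quaternion `j`. -/
def qj : Matrix (Fin 4) (Fin 4) ℝ := !![0,0,-1,0; 0,0,0,1; 1,0,0,0; 0,-1,0,0]
/-- The pure quaternion `k`. -/
def qk : Matrix (Fin 4) (Fin 4) ℝ := !![0,0,0,-1; 0,0,-1,0; 0,1,0,0; 1,0,0,0]
/-- The pure skew-quaternion `î`. -/
def qih : Matrix (Fin 4) (Fin 4) ℝ := !![0,-1,0,0; 1,0,0,0; 0,0,0,1; 0,0,-1,0]
/-- The pure skew-quaternion `ĵ`. -/
def qjh : Matrix (Fin 4) (Fin 4) ℝ := !![0,0,1,0; 0,0,0,1; -1,0,0,0; 0,-1,0,0]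
/-- The pure skew-quaternion `k̂`. -/
def qkh : Matrix (Fin 4) (Fin 4) ℝ := !![0,0,0,-1; 0,0,1,0; 0,-1,0,0; 1,0,0,0]

/-- The space `Q` of pure quaternions. -/
def Q : Submodule ℝ (Matrix (Fin 4) (Fin 4) ℝ) := Submodule.span ℝ {qi, qj, qk}
/-- The space `Q̂` of pure skew-quaternions. -/
def Qhat : Submodule ℝ (Matrix (Fin 4) (Fin 4) ℝ) := Submodule.span ℝ {qih, qjh, qkh}

open Polynomial in
/-- The characteristic polynomial with the norms entering only through their squares
`‖q‖² = a² + b² + c²` and `‖q̂‖² = â² + b̂² + ĉ²`, by direct expansion of the determinant. -/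
theorem charpoly_expanded (a b c ah bh ch : ℝ) :
    (a • qi + b • qj + c • qk + (ah • qih + bh • qjh + ch • qkh)).charpoly =
      X ^ 4 + 2 * (C (a^2 + b^2 + c^2) + C (ah^2 + bh^2 + ch^2)) * X ^ 2 +
        (C (a^2 + b^2 + c^2) - C (ah^2 + bh^2 + ch^2)) ^ 2 := by
  -- The entries of the matrix, so that the determinant is expanded on an explicit matrix.
  have hA : a • qi + b • qj + c • qk + (ah • qih + bh • qjh + ch • qkh) =
      !![0, -a - ah, -b + bh, -c - ch;
         a + ah, 0, -c + ch, b + bh;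
         b - bh, c - ch, 0, -a + ah;
         c + ch, -b - bh, a - ah, 0] := by
    ext r s
    fin_cases r <;> fin_cases s <;> simp [qi, qj, qk, qih, qjh, qkh] <;> ring
  rw [hA, Matrix.charpoly, Matrix.det_succ_row_zero]
  simp [Fin.sum_univ_succ, Matrix.det_fin_three, Matrix.charmatrix_apply, Fin.succAbove]
  ring

open Polynomial in
/-- The characteristic polynomial of `A = q + q̂`, `q = a·i + b·j + c·k ∈ Q`,
`q̂ = â·î + b̂·ĵ + ĉ·k̂ ∈ Q̂`, is `(X² + (‖q‖+‖q̂‖)²)(X² + (‖q‖−‖q̂‖)²)`; in particular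
every complex eigenvalue `ω` of `A` satisfies `−ω² = (‖q‖+‖q̂‖)²` or `−ω² = (‖q‖−‖q̂‖)²`. -/
theorem charpoly_pureQuat_add_pureSkewQuat (a b c ah bh ch : ℝ) :
    (a • qi + b • qj + c • qk + (ah • qih + bh • qjh + ch • qkh)).charpoly =
      (X ^ 2 + C ((Real.sqrt (a^2 + b^2 + c^2) + Real.sqrt (ah^2 + bh^2 + ch^2)) ^ 2)) *
      (X ^ 2 + C ((Real.sqrt (a^2 + b^2 + c^2) - Real.sqrt (ah^2 + bh^2 + ch^2)) ^ 2)) ∧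
    ∀ ω : ℂ, ω ∈ spectrum ℂ
        (((a • qi + b • qj + c • qk + (ah • qih + bh • qjh + ch • qkh)).map
          (algebraMap ℝ ℂ))) →
      -ω ^ 2 = ((Real.sqrt (a^2 + b^2 + c^2) + Real.sqrt (ah^2 + bh^2 + ch^2) : ℝ) : ℂ) ^ 2 ∨
      -ω ^ 2 = ((Real.sqrt (a^2 + b^2 + c^2) - Real.sqrt (ah^2 + bh^2 + ch^2) : ℝ) : ℂ) ^ 2 := by
  have hs : Real.sqrt (a^2 + b^2 + c^2) ^ 2 = a^2 + b^2 + c^2 := Real.sq_sqrt (by positivity)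
  have ht : Real.sqrt (ah^2 + bh^2 + ch^2) ^ 2 = ah^2 + bh^2 + ch^2 :=
    Real.sq_sqrt (by positivity)
  have key := charpoly_expanded a b c ah bh ch
  rw [← hs, ← ht] at key
  have hfac : (a • qi + b • qj + c • qk + (ah • qih + bh • qjh + ch • qkh)).charpoly =
      (X ^ 2 + C ((Real.sqrt (a^2 + b^2 + c^2) + Real.sqrt (ah^2 + bh^2 + ch^2)) ^ 2)) *
      (X ^ 2 + C ((Real.sqrt (a^2 + b^2 + c^2) - Real.sqrt (ah^2 + bh^2 + ch^2)) ^ 2)) := by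
    rw [key]
    simp only [C_pow, C_add, C_sub]
    ring
  refine ⟨hfac, fun ω hω => ?_⟩
  rw [Matrix.mem_spectrum_iff_isRoot_charpoly, Matrix.charpoly_map, hfac, IsRoot.def] at hω
  simp only [Polynomial.map_mul, Polynomial.map_add, Polynomial.map_pow, map_X, map_C, eval_mul,
    eval_add, eval_pow, eval_X, eval_C, mul_eq_zero, map_pow, Complex.coe_algebraMap] at hω
  rcases hω with h | h
  · exact Or.inl (by linear_combination -h)
  · exact Or.inr (by linear_combination -h)
end
end

section
/- Let m ≥ 2, let α, α₃, …, α_m be nonzero real numbers with pairwise distinct absolute values, let q̂₀ ∈ Q̂ be a unit pure skew-quaternion, and let N ∈ so(4 + 2(m−2), ℝ) be the block-diagonal matrix N = Bd(α·q̂₀, α₃J, …, α_mJ) (a 4×4 block α·q̂₀ followed by 2×2 blocks α_rJ). Then the centralizer of N in so(4 + 2(m−2), ℝ) equals the set of block-diagonal matrices Bd(λ·q̂₀ + q, β₃J, …, β_mJ) with λ, β₃, …, β_m ∈ ℝ and q ∈ Q; in particular it is a linear subspace of dimension 4 + (m − 2). -/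
/-!
Write `N = Bd(α q̂₀, α₃J, …, α_mJ)`. Since `q̂₀² = -1` and `J² = -1`, the square `N²` is diagonal,
equal to `-α²` on the `4×4` block and to `-α_r²` on the `r`-th `2×2` block (`bd_sq`). These values
are pairwise distinct, so a matrix commuting with `N`, hence with `N²`, has zero entries between
different blocks (`entry_eq_zero_of_commute`).

On a `2×2` block, skew-symmetry alone forces a multiple of `J` (`skew_two_blocks`). On the `4×4`
block, `so(4) = Q ⊕ Q̂` (`skew_four_decomp`), `Q` commutes with `Q̂` (`quat_comm_skewQuat`), and the
commutator on `Q̂` is twice the cross product up to sign, so only the multiples of `q̂₀` in `Q̂`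
commute with `q̂₀` (`skewQuat_parallel`). Conversely all these block matrices commute with `N`.

The dimension follows because `(v, β) ↦ Bd(v₀ q̂₀ + v₁ i + v₂ j + v₃ k, β₃J, …, β_mJ)` is an
injective linear map (`centralizerParam`) whose range is the centralizer.
-/

open Matrix

noncomputable section

/-- The centralizer of a matrix `D` inside the skew-symmetric matrices, as a submodule. -/
def skewCentralizer {n : Type*} [Fintype n] [DecidableEq n] (D : Matrix n n ℝ) :
    Submodule ℝ (Matrix n n ℝ) where
  carrier := {C | Cᵀ = -C ∧ C * D = D * C}
  add_mem' := by
    rintro a b ⟨ha1, ha2⟩ ⟨hb1, hb2⟩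
    exact ⟨by rw [Matrix.transpose_add, ha1, hb1, neg_add],
      by rw [Matrix.add_mul, Matrix.mul_add, ha2, hb2]⟩
  zero_mem' :=
    ⟨by rw [Matrix.transpose_zero, neg_zero], by rw [Matrix.zero_mul, Matrix.mul_zero]⟩
  smul_mem' := by
    rintro c a ⟨ha1, ha2⟩
    exact ⟨by rw [Matrix.transpose_smul, ha1, smul_neg],
      by rw [Matrix.smul_mul, Matrix.mul_smul, ha2]⟩


/-- The 2×2 rotation generator `J`. -/
def Jmat : Matrix (Fin 2) (Fin 2) ℝ := !![0,-1; 1,0]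

/-- The block-diagonal matrix `Bd(A, β₁J, …, β_kJ)` with a `4×4` block `A` followed by
`2×2` blocks `β_r J`. -/
def bd {k : ℕ} (A : Matrix (Fin 4) (Fin 4) ℝ) (β : Fin k → ℝ) :
    Matrix (Fin 4 ⊕ Fin k × Fin 2) (Fin 4 ⊕ Fin k × Fin 2) ℝ :=
  Matrix.fromBlocks A 0 0 (fun p q => if p.1 = q.1 then β p.1 * Jmat p.2 q.2 else 0)

/-- `Bd(β₁J, …, β_kJ)`, the lower right block of `bd`. -/
def jBlocks {k : ℕ} (β : Fin k → ℝ) : Matrix (Fin k × Fin 2) (Fin k × Fin 2) ℝ :=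
  fun p q => if p.1 = q.1 then β p.1 * Jmat p.2 q.2 else 0

lemma bd_eq {k : ℕ} (A : Matrix (Fin 4) (Fin 4) ℝ) (β : Fin k → ℝ) :
    bd A β = fromBlocks A 0 0 (jBlocks β) := rfl

lemma jBlocks_mul {k : ℕ} (β γ : Fin k → ℝ) :
    jBlocks β * jBlocks γ = diagonal (fun p => -(β p.1 * γ p.1)) := by
  ext ⟨r, a⟩ ⟨s, b⟩
  rw [mul_apply, Fintype.sum_prod_type]
  by_cases h : r = s
  · subst h
    rw [Finset.sum_eq_single r]
    · fin_cases a <;> fin_cases b <;> simp [jBlocks, Jmat]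
    · intro t _ ht
      simp [jBlocks, ht.symm]
    · simp
  · rw [diagonal_apply_ne _ (by simp [h])]
    refine Finset.sum_eq_zero fun t _ => ?_
    by_cases hr : r = t
    · subst hr
      simp [jBlocks, h]
    · simp [jBlocks, hr]

lemma jBlocks_transpose {k : ℕ} (β : Fin k → ℝ) : (jBlocks β)ᵀ = -jBlocks β := by
  ext ⟨r, a⟩ ⟨s, b⟩
  by_cases h : r = s
  · subst h
    fin_cases a <;> fin_cases b <;> simp [jBlocks, Jmat]
  · simp [jBlocks, h, Ne.symm h]

lemma mem_Q_iff (q : Matrix (Fin 4) (Fin 4) ℝ) :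
    q ∈ Q ↔ ∃ a b c : ℝ, q = a • qi + b • qj + c • qk := by
  rw [Q, Submodule.mem_span_triple]
  simp only [eq_comm]

lemma quat_comm_skewQuat (a b c x y z : ℝ) :
    (a • qi + b • qj + c • qk) * (x • qih + y • qjh + z • qkh) =
      (x • qih + y • qjh + z • qkh) * (a • qi + b • qj + c • qk) := by
  ext i j
  fin_cases i <;> fin_cases j <;>
    simp [qi, qj, qk, qih, qjh, qkh, mul_apply, Fin.sum_univ_four] <;> ring

lemma quat_add_skewQuat_transpose (a b c x y z : ℝ) :
    (x • qih + y • qjh + z • qkh + (a • qi + b • qj + c • qk))ᵀ =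
      -(x • qih + y • qjh + z • qkh + (a • qi + b • qj + c • qk)) := by
  ext i j
  fin_cases i <;> fin_cases j <;> simp [qi, qj, qk, qih, qjh, qkh] <;> ring

lemma skewQuat_sq {x y z : ℝ} (hunit : x ^ 2 + y ^ 2 + z ^ 2 = 1) :
    (x • qih + y • qjh + z • qkh) * (x • qih + y • qjh + z • qkh) = -1 := by
  ext i j
  fin_cases i <;> fin_cases j <;>
    simp [qih, qjh, qkh, mul_apply, Fin.sum_univ_four] <;> linarith

/-- Every skew-symmetric `4×4` matrix is a pure quaternion plus a pure skew-quaternion: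
`so(4) = Q ⊕ Q̂`. -/
lemma skew_four_decomp {A : Matrix (Fin 4) (Fin 4) ℝ} (hA : Aᵀ = -A) :
    ∃ a b c d e f : ℝ, A = d • qih + e • qjh + f • qkh + (a • qi + b • qj + c • qk) := by
  have hs : ∀ i j, A j i = -A i j := fun i j => congrFun (congrFun hA i) j
  have hd : ∀ i, A i i = 0 := fun i => by linarith [hs i i]
  refine ⟨(A 1 0 + A 3 2) / 2, (A 2 0 - A 3 1) / 2, (A 3 0 + A 2 1) / 2,
    (A 1 0 - A 3 2) / 2, -(A 2 0 + A 3 1) / 2, (A 3 0 - A 2 1) / 2, ?_⟩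
  ext i j
  fin_cases i <;> fin_cases j <;>
    simp [qi, qj, qk, qih, qjh, qkh, hd] <;>
    linarith [hs 0 1, hs 0 2, hs 0 3, hs 1 2, hs 1 3, hs 2 3]

/-- Two commuting skew-quaternions are parallel, because their commutator is, up to sign,
twice the cross product of the coefficient vectors; when one is a unit, the ratio is the scalar product. -/
lemma skewQuat_parallel {x y z d e f : ℝ} (hunit : x ^ 2 + y ^ 2 + z ^ 2 = 1)
    (h : (d • qih + e • qjh + f • qkh) * (x • qih + y • qjh + z • qkh) =
      (x • qih + y • qjh + z • qkh) * (d • qih + e • qjh + f • qkh)) :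
    d • qih + e • qjh + f • qkh = (d * x + e * y + f * z) • (x • qih + y • qjh + z • qkh) := by
  have e1 := congrFun (congrFun h 0) 1
  have e2 := congrFun (congrFun h 0) 2
  have e3 := congrFun (congrFun h 0) 3
  simp [qih, qjh, qkh, mul_apply, Fin.sum_univ_four] at e1 e2 e3
  have hxy : d * y = e * x := by linarith
  have hyz : e * z = f * y := by linarith
  have hxz : d * z = f * x := by linarith
  have hd : d = (d * x + e * y + f * z) * x := by
    linear_combination (-d) * hunit + y * hxy + z * hxz
  have he : e = (d * x + e * y + f * z) * y := by
    linear_combination (-e) * hunit - x * hxy + z * hyz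
  have hf : f = (d * x + e * y + f * z) * z := by
    linear_combination (-f) * hunit - x * hxz - y * hyz
  rw [smul_add, smul_add, smul_smul, smul_smul, smul_smul, ← hd, ← he, ← hf]

/-- The case of a single `4×4` block: the centralizer of a unit pure skew-quaternion in `so(4)`
is `ℝ q̂₀ ⊕ Q`. -/
lemma skew_four_commute {x y z : ℝ} (hunit : x ^ 2 + y ^ 2 + z ^ 2 = 1)
    {A : Matrix (Fin 4) (Fin 4) ℝ} (hA : Aᵀ = -A)
    (h : A * (x • qih + y • qjh + z • qkh) = (x • qih + y • qjh + z • qkh) * A) :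
    ∃ (l : ℝ) (q : Matrix (Fin 4) (Fin 4) ℝ),
      q ∈ Q ∧ A = l • (x • qih + y • qjh + z • qkh) + q := by
  obtain ⟨a, b, c, d, e, f, rfl⟩ := skew_four_decomp hA
  rw [add_mul, mul_add _ (d • qih + e • qjh + f • qkh), quat_comm_skewQuat, add_left_inj] at h
  exact ⟨_, _, (mem_Q_iff _).2 ⟨a, b, c, rfl⟩, by rw [skewQuat_parallel hunit h]⟩

/-- A skew-symmetric matrix supported on the `2×2` diagonal blocks is `Bd(β₁J, …, β_kJ)`. -/
lemma skew_two_blocks {k : ℕ} {D : Matrix (Fin k × Fin 2) (Fin k × Fin 2) ℝ} (hD : Dᵀ = -D)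
    (h : ∀ p q, p.1 ≠ q.1 → D p q = 0) : D = jBlocks (fun r => D (r, 1) (r, 0)) := by
  have hs : ∀ i j, D j i = -D i j := fun i j => congrFun (congrFun hD i) j
  have hd : ∀ i, D i i = 0 := fun i => by linarith [hs i i]
  ext ⟨r, a⟩ ⟨s, b⟩
  by_cases hrs : r = s
  · subst hrs
    fin_cases a <;> fin_cases b <;> simp [jBlocks, Jmat, hd]
    exact hs _ _
  · simp [jBlocks, hrs, h (r, a) (s, b) hrs]

/-- If `C` commutes with a matrix whose square is diagonal, then `C` has no entries between
distinct eigenvalues of that square. -/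
lemma entry_eq_zero_of_commute {n : Type*} [Fintype n] [DecidableEq n] {C N : Matrix n n ℝ}
    {d : n → ℝ} (hN : N * N = diagonal d) (h : C * N = N * C) {p q : n} (hpq : d p ≠ d q) :
    C p q = 0 := by
  have h2 : C * diagonal d = diagonal d * C := by
    rw [← hN, ← mul_assoc, h, mul_assoc, h, mul_assoc]
  have h3 := congrFun (congrFun h2 p) q
  rw [mul_diagonal, diagonal_mul] at h3
  have h4 : (d p - d q) * C p q = 0 := by linarith
  exact (mul_eq_zero.1 h4).resolve_left (sub_ne_zero.2 hpq)

lemma bd_sq {k : ℕ} {x y z : ℝ} (hunit : x ^ 2 + y ^ 2 + z ^ 2 = 1) (α : ℝ) (αr : Fin k → ℝ) :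
    bd (α • (x • qih + y • qjh + z • qkh)) αr * bd (α • (x • qih + y • qjh + z • qkh)) αr =
      diagonal (Sum.elim (fun _ => -(α ^ 2)) (fun p => -(αr p.1 ^ 2))) := by
  rw [bd_eq, fromBlocks_multiply, jBlocks_mul, smul_mul_smul_comm, skewQuat_sq hunit,
    ← fromBlocks_diagonal]
  congr 1
  · ext i j
    by_cases h : i = j
    · subst h
      simp [pow_two]
    · simp [h]
  · simp
  · simp
  · simp [pow_two]

/-- The parametrization `(v, β) ↦ Bd(v₀ q̂₀ + v₁ i + v₂ j + v₃ k, β₁J, …, β_kJ)` of the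
centralizer, as a linear map. -/
def centralizerParam (k : ℕ) (q0 : Matrix (Fin 4) (Fin 4) ℝ) :
    ((Fin 4 → ℝ) × (Fin k → ℝ)) →ₗ[ℝ]
      Matrix (Fin 4 ⊕ Fin k × Fin 2) (Fin 4 ⊕ Fin k × Fin 2) ℝ where
  toFun w := bd (w.1 0 • q0 + (w.1 1 • qi + w.1 2 • qj + w.1 3 • qk)) w.2
  map_add' v w := by
    simp only [bd_eq, fromBlocks_add, add_zero]
    congr 1
    · simp only [Prod.fst_add, Pi.add_apply, add_smul]
      abel
    · ext p q
      simp only [jBlocks, Matrix.add_apply, Prod.snd_add, Pi.add_apply]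
      split_ifs <;> ring
  map_smul' c w := by
    simp only [bd_eq, fromBlocks_smul, smul_zero, RingHom.id_apply]
    congr 1
    · simp only [Prod.smul_fst, Pi.smul_apply, smul_eq_mul, mul_smul, smul_add]
    · ext p q
      simp only [jBlocks, Matrix.smul_apply, Prod.smul_snd, Pi.smul_apply, smul_eq_mul]
      split_ifs <;> ring

lemma centralizerParam_injective (k : ℕ) {x y z : ℝ} (hunit : x ^ 2 + y ^ 2 + z ^ 2 = 1) :
    Function.Injective (centralizerParam k (x • qih + y • qjh + z • qkh)) := by
  rw [← LinearMap.ker_eq_bot, LinearMap.ker_eq_bot']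
  rintro ⟨v, β⟩ h
  have h' : bd (v 0 • (x • qih + y • qjh + z • qkh) + (v 1 • qi + v 2 • qj + v 3 • qk)) β = 0 := h
  rw [bd_eq, ← fromBlocks_zero, fromBlocks_inj] at h'
  obtain ⟨hA, -, -, hD⟩ := h'
  have a10 := congrFun (congrFun hA 1) 0
  have a32 := congrFun (congrFun hA 3) 2
  have a20 := congrFun (congrFun hA 2) 0
  have a31 := congrFun (congrFun hA 3) 1
  have a30 := congrFun (congrFun hA 3) 0
  have a21 := congrFun (congrFun hA 2) 1
  simp [qi, qj, qk, qih, qjh, qkh] at a10 a32 a20 a31 a30 a21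
  have hx : v 0 * x = 0 := by linarith
  have hy : v 0 * y = 0 := by linarith
  have hz : v 0 * z = 0 := by linarith
  have h0 : v 0 = 0 := by
    linear_combination (-v 0) * hunit + x * hx + y * hy + z * hz
  refine Prod.ext (funext fun i => ?_) (funext fun r => ?_)
  · fin_cases i <;> simp <;> linarith
  · have := congrFun (congrFun hD (r, 1)) (r, 0)
    simpa [jBlocks, Jmat] using this

/-- The centralizer as a set: off-diagonal blocks of `C` vanish because `C` commutes with `N²`,
and the diagonal blocks are then treated separately. -/
lemma centralizer_iff {k : ℕ} {x y z : ℝ} (hunit : x ^ 2 + y ^ 2 + z ^ 2 = 1)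
    {α : ℝ} (hα : α ≠ 0) {αr : Fin k → ℝ}
    (h1 : ∀ r, |αr r| ≠ |α|) (h2 : ∀ r s, r ≠ s → |αr r| ≠ |αr s|)
    (C : Matrix (Fin 4 ⊕ Fin k × Fin 2) (Fin 4 ⊕ Fin k × Fin 2) ℝ) :
    (Cᵀ = -C ∧ C * bd (α • (x • qih + y • qjh + z • qkh)) αr =
        bd (α • (x • qih + y • qjh + z • qkh)) αr * C) ↔
      ∃ (l : ℝ) (q : Matrix (Fin 4) (Fin 4) ℝ) (β : Fin k → ℝ),
        q ∈ Q ∧ C = bd (l • (x • qih + y • qjh + z • qkh) + q) β := by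
  constructor
  · rintro ⟨hC, hN⟩
    have hB : C.toBlocks₁₂ = 0 := by
      ext i p
      refine entry_eq_zero_of_commute (bd_sq hunit α αr) hN ?_
      simpa [sq_eq_sq_iff_abs_eq_abs] using (h1 p.1).symm
    have hB' : C.toBlocks₂₁ = 0 := by
      ext p i
      refine entry_eq_zero_of_commute (bd_sq hunit α αr) hN ?_
      simpa [sq_eq_sq_iff_abs_eq_abs] using h1 p.1
    have hD : ∀ p q, p.1 ≠ q.1 → C.toBlocks₂₂ p q = 0 := by
      intro p q hpq
      refine entry_eq_zero_of_commute (bd_sq hunit α αr) hN ?_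
      simpa [sq_eq_sq_iff_abs_eq_abs] using h2 _ _ hpq
    have hAs : C.toBlocks₁₁ᵀ = -C.toBlocks₁₁ := by
      ext i j
      exact congrFun (congrFun hC (Sum.inl i)) (Sum.inl j)
    have hDs : C.toBlocks₂₂ᵀ = -C.toBlocks₂₂ := by
      ext i j
      exact congrFun (congrFun hC (Sum.inr i)) (Sum.inr j)
    have hCb : C = fromBlocks C.toBlocks₁₁ 0 0 C.toBlocks₂₂ := by
      conv_lhs => rw [← fromBlocks_toBlocks C, hB, hB']
    have hA : C.toBlocks₁₁ * (x • qih + y • qjh + z • qkh) =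
        (x • qih + y • qjh + z • qkh) * C.toBlocks₁₁ := by
      rw [hCb, bd_eq, fromBlocks_multiply, fromBlocks_multiply, fromBlocks_inj] at hN
      have := hN.1
      simp only [Matrix.mul_zero, add_zero, mul_smul_comm, smul_mul_assoc] at this
      exact smul_right_injective _ hα this
    obtain ⟨l, q, hq, hlq⟩ := skew_four_commute hunit hAs hA
    refine ⟨l, q, fun r => C.toBlocks₂₂ (r, 1) (r, 0), hq, ?_⟩
    rw [bd_eq, ← hlq, ← skew_two_blocks hDs hD]
    exact hCb
  · rintro ⟨l, q, β, hq, rfl⟩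
    obtain ⟨a, b, c, rfl⟩ := (mem_Q_iff q).1 hq
    refine ⟨?_, ?_⟩
    · rw [bd_eq, fromBlocks_transpose, fromBlocks_neg, jBlocks_transpose, smul_add, smul_add,
        smul_smul, smul_smul, smul_smul, quat_add_skewQuat_transpose]
      simp
    · rw [bd_eq, bd_eq, fromBlocks_multiply, fromBlocks_multiply, jBlocks_mul, jBlocks_mul]
      congr 1
      · rw [add_mul, mul_add _ (l • _), mul_smul_comm α, mul_smul_comm α, smul_mul_assoc α, smul_mul_assoc α,
          quat_comm_skewQuat]
        simp only [Matrix.mul_zero, mul_smul_comm, smul_mul_assoc, smul_comm α l]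
      · simp
      · simp
      · simp [mul_comm]

/-- Let `N = Bd(α·q̂₀, α₃J, …, α_mJ)` with `q̂₀` a unit pure skew-quaternion and
`α, α₃, …, α_m` nonzero reals with pairwise distinct absolute values. The centralizer of
`N` in `so(4 + 2(m−2), ℝ)` is the set of block-diagonal matrices
`Bd(λ·q̂₀ + q, β₃J, …, β_mJ)` with `λ, β_r ∈ ℝ`, `q ∈ Q`; it has dimension `4 + (m−2)`. -/
theorem centralizer_bd_unit_pureSkewQuat (m : ℕ) (hm : 2 ≤ m)
    (x y z : ℝ) (hunit : x ^ 2 + y ^ 2 + z ^ 2 = 1)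
    (q0 : Matrix (Fin 4) (Fin 4) ℝ) (hq0 : q0 = x • qih + y • qjh + z • qkh)
    (α : ℝ) (hα : α ≠ 0) (αr : Fin (m - 2) → ℝ) (hαr : ∀ r, αr r ≠ 0)
    (h1 : ∀ r, |αr r| ≠ |α|) (h2 : ∀ r s, r ≠ s → |αr r| ≠ |αr s|) :
    (∀ C : Matrix (Fin 4 ⊕ Fin (m - 2) × Fin 2) (Fin 4 ⊕ Fin (m - 2) × Fin 2) ℝ,
      (Cᵀ = -C ∧ C * bd (α • q0) αr = bd (α • q0) αr * C) ↔
        ∃ (l : ℝ) (q : Matrix (Fin 4) (Fin 4) ℝ) (β : Fin (m - 2) → ℝ),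
          q ∈ Q ∧ C = bd (l • q0 + q) β) ∧
    Module.finrank ℝ (skewCentralizer (bd (α • q0) αr)) = 4 + (m - 2) := by
  subst hq0
  refine ⟨centralizer_iff hunit hα h1 h2, ?_⟩
  have hrange : skewCentralizer (bd (α • (x • qih + y • qjh + z • qkh)) αr) =
      LinearMap.range (centralizerParam (m - 2) (x • qih + y • qjh + z • qkh)) := by
    ext C
    refine (centralizer_iff hunit hα h1 h2 C).trans ?_
    rw [LinearMap.mem_range]
    constructor
    · rintro ⟨l, q, β, hq, rfl⟩
      obtain ⟨a, b, c, rfl⟩ := (mem_Q_iff q).1 hq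
      exact ⟨(![l, a, b, c], β), rfl⟩
    · rintro ⟨w, rfl⟩
      exact ⟨_, _, _, (mem_Q_iff _).2 ⟨_, _, _, rfl⟩, rfl⟩
  rw [hrange, LinearMap.finrank_range_of_inj (centralizerParam_injective _ hunit)]
  simp
end
end
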